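/- Let X ⊆ ℝⁿ be open, let f : X → ℝⁿ be a C¹ cooperative irreducible vector field, and let γ : [0,T] → X be a solution of ẋ = f(x). Let M : [0,T] → Mat_{n×n}(ℝ) be differentiable with M(0) = Id and M'(t) = Df(γ(t))·M(t) for all t ∈ [0,T], where Df(γ(t)) is the Jacobian matrix of f at γ(t). Then for every vector v ∈ ℝⁿ with v > 0 and every t ∈ (0,T], all coordinates of M(t)v are strictly positive, i.e. M(t)v ≫ 0. -/

import Mathlib

open Set Filter Topology

noncomputable section

/-- `f` is a cooperative vector field on `X`: the off-diagonal entries of the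
Jacobian are nonnegative. -/
def coopVF {n : ℕ} (f : (Fin n → ℝ) → (Fin n → ℝ)) (X : Set (Fin n → ℝ)) : Prop :=
  ∀ x ∈ X, ∀ i j : Fin n, i ≠ j → 0 ≤ fderiv ℝ f x (Pi.single j 1) i

/-- The Jacobian matrix of `f` at `x`. -/
def jacMat {n : ℕ} (f : (Fin n → ℝ) → (Fin n → ℝ)) (x : Fin n → ℝ) :
    Fin n → Fin n → ℝ :=
  fun i j => fderiv ℝ f x (Pi.single j 1) i

/-- A matrix is irreducible if for every nonempty proper subset `S` of indices there
are `i ∈ S`, `j ∉ S` with `A i j ≠ 0`. -/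
def matIrred {n : ℕ} (A : Fin n → Fin n → ℝ) : Prop :=
  ∀ S : Set (Fin n), S.Nonempty → S ≠ Set.univ → ∃ i ∈ S, ∃ j ∉ S, A i j ≠ 0

/-- `X` is p-convex: the segment joining any two order-related points of `X` lies in `X`. -/
def pconvex {n : ℕ} (X : Set (Fin n → ℝ)) : Prop :=
  ∀ x ∈ X, ∀ y ∈ X, x < y → segment ℝ x y ⊆ X

/-- `x ≪ y`: strict inequality in every coordinate. -/
def strLt {n : ℕ} (x y : Fin n → ℝ) : Prop := ∀ i, x i < y i

/-- `γ` is a solution of `ẋ = f(x)` on the time interval `I`, with values in `X`. -/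
def IsSolOn {n : ℕ} (f : (Fin n → ℝ) → (Fin n → ℝ)) (X : Set (Fin n → ℝ))
    (I : Set ℝ) (γ : ℝ → Fin n → ℝ) : Prop :=
  (∀ t ∈ I, γ t ∈ X) ∧ (∀ t ∈ I, HasDerivWithinAt γ (f (γ t)) I t)

/-- The ω-limit set (within `X`) of a curve `γ`. -/
def omegaSet {n : ℕ} (X : Set (Fin n → ℝ)) (γ : ℝ → Fin n → ℝ) :
    Set (Fin n → ℝ) :=
  {y | y ∈ X ∧ ∃ t : ℕ → ℝ, Tendsto t atTop atTop ∧
    Tendsto (fun k => γ (t k)) atTop (𝓝 y)}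

/-- The α-limit set (within `X`) of a curve `γ`. -/
def alphaSet {n : ℕ} (X : Set (Fin n → ℝ)) (γ : ℝ → Fin n → ℝ) :
    Set (Fin n → ℝ) :=
  {y | y ∈ X ∧ ∃ t : ℕ → ℝ, Tendsto t atTop atBot ∧
    Tendsto (fun k => γ (t k)) atTop (𝓝 y)}

/-- The Euclidean norm on `Fin n → ℝ`. -/
def eunorm {n : ℕ} (v : Fin n → ℝ) : ℝ := Real.sqrt (∑ i, (v i) ^ 2)

/-- `X` is order-convex: it contains the order interval of any two of its points. -/
def orderConvex {n : ℕ} (X : Set (Fin n → ℝ)) : Prop :=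
  ∀ x ∈ X, ∀ y ∈ X, x ≤ y → Set.Icc x y ⊆ X

/-!
Along the curve, `w = M v` solves the linear system `w' = A(t) w` whose matrix `A = Df ∘ γ` has
nonnegative off-diagonal entries. A minimum principle, applied after an exponential rescaling that
makes all row sums of `A` negative, gives `w ≥ 0`. Rescaling the other way makes all entries of `A`
nonnegative, so that each rescaled coordinate of `w` is nondecreasing: a coordinate that is once
positive stays positive. Hence if a coordinate vanishes at a time `t > 0`, it vanishes on all
of `[0, t]`, so its derivative at `t` is zero and every coordinate coupled to it through `A(t)`
vanishes as well. By irreducibility, one zero coordinate would force `w(t) = 0`, contradicting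
the persistence of a positive coordinate of `v`.
-/

open Matrix

lemma exists_apply_le_of_isCompact {α ι β : Type*} [TopologicalSpace α] [Finite ι] [Nonempty ι]
    [LinearOrder β] [TopologicalSpace β] [ClosedIicTopology β] {s : Set α} (hs : IsCompact s)
    (hne : s.Nonempty) {w : α → ι → β} (hw : ContinuousOn w s) :
    ∃ x ∈ s, ∃ i, ∀ y ∈ s, ∀ j, w x i ≤ w y j := by
  choose τ hτ hτmin using fun i => hs.exists_isMinOn hne (continuousOn_pi.1 hw i)
  obtain ⟨i, hi⟩ := Finite.exists_min fun i => w (τ i) i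
  exact ⟨τ i, hτ i, i, fun y hy j => (hi j).trans (hτmin j hy)⟩

lemma hasDerivWithinAt_nonpos_of_isMinOn_Icc {g : ℝ → ℝ} {g' a b t : ℝ}
    (hg : HasDerivWithinAt g g' (Icc a b) t) (hmin : IsMinOn g (Icc a b) t) (ht : t ∈ Ioc a b) :
    g' ≤ 0 := by
  have htI : t ∈ Icc a b := Ioc_subset_Icc_self ht
  have hcone : a - t ∈ posTangentConeAt (Icc a b) t :=
    sub_mem_posTangentConeAt_of_segment_subset
      ((convex_Icc a b).segment_subset htI (left_mem_Icc.2 (htI.1.trans htI.2)))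
  have hdir : 0 ≤ (a - t) * g' := by
    simpa using hmin.localize.hasFDerivWithinAt_nonneg hg.hasFDerivWithinAt hcone
  exact nonpos_of_mul_nonneg_right hdir (sub_neg.2 ht.1)

section LinearSystem

variable {ι : Type*}

/-- A Metzler matrix: its off-diagonal entries are nonnegative. The vector field `f` is cooperative
exactly when its Jacobian matrices are Metzler. -/
def IsMetzler (A : Matrix ι ι ℝ) : Prop := ∀ i j, i ≠ j → 0 ≤ A i j

namespace IsMetzler

variable {A : Matrix ι ι ℝ}

lemma add_smul_one [DecidableEq ι] (hA : IsMetzler A) (c : ℝ) :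
    IsMetzler (A + c • (1 : Matrix ι ι ℝ)) := fun i j hij => by
  simpa [one_apply_ne hij] using hA i j hij

lemma rowSum_mul_le_mulVec [Fintype ι] (hA : IsMetzler A) {x : ι → ℝ} {i : ι}
    (hi : ∀ j, x i ≤ x j) : (∑ j, A i j) * x i ≤ (A *ᵥ x) i := by
  rw [Finset.sum_mul]
  refine Finset.sum_le_sum fun j _ => ?_
  obtain rfl | hij := eq_or_ne i j
  · rfl
  · exact mul_le_mul_of_nonneg_left (hi j) (hA i j hij)

lemma eq_zero_of_mulVec_eq_zero [Fintype ι] (hA : IsMetzler A) {x : ι → ℝ} (hx : 0 ≤ x) {i j : ι}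
    (hi : x i = 0) (hAx : (A *ᵥ x) i = 0) (hij : A i j ≠ 0) : x j = 0 := by
  have hterm : ∀ k ∈ Finset.univ, 0 ≤ A i k * x k := fun k _ => by
    obtain rfl | hik := eq_or_ne i k
    · simp [hi]
    · exact mul_nonneg (hA i k hik) (hx k)
  have hzero : A i j * x j = 0 :=
    (Finset.sum_eq_zero_iff_of_nonneg hterm).1 hAx j (Finset.mem_univ j)
  exact (mul_eq_zero.1 hzero).resolve_left hij

end IsMetzler

variable [Fintype ι]

/-- `w` solves the time-dependent linear system `w' = A(t) w` on the set of times `I`, with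
one-sided derivatives at the endpoints of `I`. -/
def IsLinearSolOn (A : ℝ → Matrix ι ι ℝ) (I : Set ℝ) (w : ℝ → ι → ℝ) : Prop :=
  ∀ t ∈ I, HasDerivWithinAt w (A t *ᵥ w t) I t

lemma isLinearSolOn_mulVec {κ : Type*} [Fintype κ] {A : ℝ → Matrix ι ι ℝ} {I : Set ℝ}
    {M : ℝ → ι → κ → ℝ} (hM : ∀ t ∈ I, HasDerivWithinAt M (A t * of (M t)) I t) (v : κ → ℝ) :
    IsLinearSolOn A I fun t => of (M t) *ᵥ v := by
  intro t ht
  rw [mulVec_mulVec]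
  refine hasDerivWithinAt_pi.2 fun i => HasDerivWithinAt.fun_sum fun j _ => ?_
  exact (hasDerivWithinAt_pi.1 (hasDerivWithinAt_pi.1 (hM t ht) i) j).mul_const (v j)

namespace IsLinearSolOn

variable {A : ℝ → Matrix ι ι ℝ} {w : ℝ → ι → ℝ} {I : Set ℝ} {a b t K L : ℝ}

lemma continuousOn (hw : IsLinearSolOn A I w) : ContinuousOn w I :=
  fun t ht => (hw t ht).continuousWithinAt

lemma hasDerivWithinAt_apply (hw : IsLinearSolOn A I w) (ht : t ∈ I) (i : ι) :
    HasDerivWithinAt (fun s => w s i) ((A t *ᵥ w t) i) I t :=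
  hasDerivWithinAt_pi.1 (hw t ht) i

lemma exp_smul [DecidableEq ι] (hw : IsLinearSolOn A I w) (c : ℝ) :
    IsLinearSolOn (fun t => A t + c • (1 : Matrix ι ι ℝ)) I fun t => Real.exp (c * t) • w t := by
  intro t ht
  have hexp : HasDerivAt (fun s => Real.exp (c * s)) (Real.exp (c * t) * c) t := by
    simpa using ((hasDerivAt_id t).const_mul c).exp
  refine (hexp.hasDerivWithinAt.smul (hw t ht)).congr_deriv ?_
  simp only [add_mulVec, mulVec_smul, smul_mulVec, one_mulVec, smul_add, smul_smul]

lemma nonneg_of_rowSum_neg (hw : IsLinearSolOn A (Icc a b) w)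
    (hA : ∀ t ∈ Icc a b, IsMetzler (A t)) (hrow : ∀ t ∈ Icc a b, ∀ i, ∑ j, A t i j < 0)
    (h0 : 0 ≤ w a) (ht : t ∈ Icc a b) : 0 ≤ w t := by
  intro i
  have : Nonempty ι := ⟨i⟩
  obtain ⟨τ, hτ, k, hmin⟩ := exists_apply_le_of_isCompact isCompact_Icc ⟨t, ht⟩ hw.continuousOn
  suffices 0 ≤ w τ k from this.trans (hmin t ht i)
  by_contra! hneg
  have haτ : a < τ := hτ.1.lt_of_ne fun h => hneg.not_ge (h ▸ h0 k)
  have hderiv : (A τ *ᵥ w τ) k ≤ 0 :=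
    hasDerivWithinAt_nonpos_of_isMinOn_Icc (hw.hasDerivWithinAt_apply hτ k)
      (fun s hs => hmin s hs k) ⟨haτ, hτ.2⟩
  have hpos : 0 < (A τ *ᵥ w τ) k :=
    (mul_pos_of_neg_of_neg (hrow τ hτ k) hneg).trans_le
      ((hA τ hτ).rowSum_mul_le_mulVec fun j => hmin τ hτ j)
  exact hderiv.not_gt hpos

lemma nonneg_of_rowSum_le (hw : IsLinearSolOn A (Icc a b) w)
    (hA : ∀ t ∈ Icc a b, IsMetzler (A t)) (hrow : ∀ t ∈ Icc a b, ∀ i, ∑ j, A t i j ≤ L)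
    (h0 : 0 ≤ w a) (ht : t ∈ Icc a b) : 0 ≤ w t := by
  classical
  have hrescaled : 0 ≤ Real.exp (-(L + 1) * t) • w t := by
    refine (hw.exp_smul (-(L + 1))).nonneg_of_rowSum_neg (fun s hs => (hA s hs).add_smul_one _)
      (fun s hs i => ?_) (smul_nonneg (Real.exp_pos _).le h0) ht
    simp only [Matrix.add_apply, Matrix.smul_apply, one_apply, smul_eq_mul, mul_ite, mul_one,
      mul_zero, Finset.sum_add_distrib, Finset.sum_ite_eq, Finset.mem_univ, if_true]
    linarith [hrow s hs i]
  exact fun i => (mul_nonneg_iff_of_pos_left (Real.exp_pos _)).1 (hrescaled i)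

lemma monotoneOn_of_nonneg (hw : IsLinearSolOn A (Icc a b) w)
    (hA : ∀ t ∈ Icc a b, ∀ i j, 0 ≤ A t i j) (hnonneg : ∀ t ∈ Icc a b, 0 ≤ w t) :
    MonotoneOn w (Icc a b) := by
  refine fun s hs t ht hst i => monotoneOn_of_hasDerivWithinAt_nonneg (convex_Icc a b)
    (continuousOn_pi.1 hw.continuousOn i)
    (fun u hu => (hw.hasDerivWithinAt_apply (interior_subset hu) i).mono interior_subset)
    (fun u hu => ?_) hs ht hst
  have huI : u ∈ Icc a b := interior_subset hu
  exact Finset.sum_nonneg fun j _ => mul_nonneg (hA u huI i j) (hnonneg u huI j)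

lemma monotoneOn_exp_smul (hw : IsLinearSolOn A (Icc a b) w)
    (hA : ∀ t ∈ Icc a b, IsMetzler (A t)) (hdiag : ∀ t ∈ Icc a b, ∀ i, -K ≤ A t i i)
    (hnonneg : ∀ t ∈ Icc a b, 0 ≤ w t) :
    MonotoneOn (fun t => Real.exp (K * t) • w t) (Icc a b) := by
  classical
  refine (hw.exp_smul K).monotoneOn_of_nonneg (fun t ht i j => ?_)
    fun t ht => smul_nonneg (Real.exp_pos _).le (hnonneg t ht)
  obtain rfl | hij := eq_or_ne i j
  · simpa using neg_le_iff_add_nonneg.1 (hdiag t ht i)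
  · exact (hA t ht).add_smul_one K i j hij

lemma pos_of_pos_of_le (hw : IsLinearSolOn A (Icc a b) w)
    (hA : ∀ t ∈ Icc a b, IsMetzler (A t)) (hdiag : ∀ t ∈ Icc a b, ∀ i, -K ≤ A t i i)
    (hnonneg : ∀ t ∈ Icc a b, 0 ≤ w t) {s : ℝ} (hs : s ∈ Icc a b) (ht : t ∈ Icc a b)
    (hst : s ≤ t) {i : ι} (hpos : 0 < w s i) : 0 < w t i := by
  have hle : Real.exp (K * s) * w s i ≤ Real.exp (K * t) * w t i :=
    hw.monotoneOn_exp_smul hA hdiag hnonneg hs ht hst i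
  exact pos_of_mul_pos_right ((mul_pos (Real.exp_pos _) hpos).trans_le hle) (Real.exp_pos _).le

lemma mulVec_eq_zero_of_eq_zero (hw : IsLinearSolOn A (Icc a b) w)
    (hA : ∀ t ∈ Icc a b, IsMetzler (A t)) (hdiag : ∀ t ∈ Icc a b, ∀ i, -K ≤ A t i i)
    (hnonneg : ∀ t ∈ Icc a b, 0 ≤ w t) (ht : t ∈ Ioc a b) {i : ι} (hi : w t i = 0) :
    (A t *ᵥ w t) i = 0 := by
  have htI : t ∈ Icc a b := Ioc_subset_Icc_self ht
  have hpast : ∀ s ∈ Icc a t, w s i = 0 := fun s hs => by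
    have hsI : s ∈ Icc a b := ⟨hs.1, hs.2.trans ht.2⟩
    refine (hnonneg s hsI i).eq_of_not_lt' fun hpos => ?_
    exact (hw.pos_of_pos_of_le hA hdiag hnonneg hsI htI hs.2 hpos).ne' hi
  have hderiv := (hw.hasDerivWithinAt_apply htI i).mono (Icc_subset_Icc_right ht.2)
  have hconst : HasDerivWithinAt (fun s => w s i) 0 (Icc a t) t :=
    (hasDerivWithinAt_const t (Icc a t) (0 : ℝ)).congr hpast hi
  exact (uniqueDiffOn_Icc ht.1 t (right_mem_Icc.2 ht.1.le)).eq_deriv _ hderiv hconst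

end IsLinearSolOn

end LinearSystem

lemma exists_abs_jacMat_le {n : ℕ} {f : (Fin n → ℝ) → (Fin n → ℝ)} {X S : Set (Fin n → ℝ)}
    (hX : IsOpen X) (hf : ContDiffOn ℝ 1 f X) (hS : IsCompact S) (hSX : S ⊆ X) :
    ∃ K, ∀ x ∈ S, ∀ i j, |jacMat f x i j| ≤ K := by
  have hcont : ContinuousOn (jacMat f) S :=
    continuousOn_pi.2 fun i => continuousOn_pi.2 fun j => (continuous_apply i).comp_continuousOn
      (((hf.continuousOn_fderiv_of_isOpen hX le_rfl).mono hSX).clm_apply continuousOn_const)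
  obtain ⟨K, hK⟩ := hS.exists_bound_of_continuousOn hcont
  exact ⟨K, fun x hx i j =>
    ((norm_le_pi_norm (jacMat f x i) j).trans (norm_le_pi_norm (jacMat f x) i)).trans (hK x hx)⟩

theorem stmt_5_general {n : ℕ} {A : ℝ → Matrix (Fin n) (Fin n) ℝ} {a b K : ℝ}
    (hK : ∀ t ∈ Icc a b, ∀ i j, |A t i j| ≤ K) (hA : ∀ t ∈ Icc a b, IsMetzler (A t))
    {w : ℝ → Fin n → ℝ} (hw : IsLinearSolOn A (Icc a b) w) (h0 : 0 < w a)
    {t : ℝ} (ht : t ∈ Ioc a b) (hirr : matIrred (A t)) : ∀ i, 0 < w t i := by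
  have htI : t ∈ Icc a b := Ioc_subset_Icc_self ht
  have hrow : ∀ s ∈ Icc a b, ∀ i, ∑ j, A s i j ≤ n * K := fun s hs i => by
    simpa using Finset.sum_le_card_nsmul Finset.univ _ K fun j _ => (abs_le.1 (hK s hs i j)).2
  have hdiag : ∀ s ∈ Icc a b, ∀ i, -K ≤ A s i i := fun s hs i => (abs_le.1 (hK s hs i i)).1
  have hnonneg : ∀ s ∈ Icc a b, 0 ≤ w s := fun s hs => hw.nonneg_of_rowSum_le hA hrow h0.le hs
  obtain ⟨-, k, hk⟩ := Pi.lt_def.1 h0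
  have hkt : 0 < w t k :=
    hw.pos_of_pos_of_le hA hdiag hnonneg (left_mem_Icc.2 (htI.1.trans htI.2)) htI htI.1 hk
  intro i
  refine (hnonneg t htI i).lt_of_ne' fun hi => ?_
  obtain ⟨p, hp, q, hq, hpq⟩ := hirr {j | w t j = 0} ⟨i, hi⟩
    fun huniv => hkt.ne' (huniv ▸ mem_univ k : k ∈ {j | w t j = 0})
  exact hq ((hA t htI).eq_zero_of_mulVec_eq_zero (hnonneg t htI) hp
    (hw.mulVec_eq_zero_of_eq_zero hA hdiag hnonneg ht hp) hpq)

/-- strong monotonicity of the derivative flow. -/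
theorem stmt_5 {n : ℕ} {X : Set (Fin n → ℝ)} (hX : IsOpen X)
    {f : (Fin n → ℝ) → (Fin n → ℝ)} (hf : ContDiffOn ℝ 1 f X) (hcoop : coopVF f X)
    (hirr : ∀ x ∈ X, matIrred (jacMat f x))
    {T : ℝ} (hT : 0 < T) {γ : ℝ → Fin n → ℝ} (hγ : IsSolOn f X (Set.Icc 0 T) γ)
    {M : ℝ → Fin n → Fin n → ℝ}
    (hM0 : ∀ i j, M 0 i j = if i = j then (1 : ℝ) else 0)
    (hM : ∀ t ∈ Set.Icc (0 : ℝ) T,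
      HasDerivWithinAt M (fun i j => ∑ k, jacMat f (γ t) i k * M t k j)
        (Set.Icc 0 T) t)
    {v : Fin n → ℝ} (hv : 0 < v) :
    ∀ t ∈ Set.Ioc (0 : ℝ) T, ∀ i, 0 < ∑ j, M t i j * v j := by
  intro t ht
  have hcont : ContinuousOn γ (Icc 0 T) := fun s hs => (hγ.2 s hs).continuousWithinAt
  obtain ⟨K, hK⟩ := exists_abs_jacMat_le hX hf (isCompact_Icc.image_of_continuousOn hcont)
    (image_subset_iff.2 hγ.1)
  have hinit : of (M 0) *ᵥ v = v := by
    rw [show of (M 0) = 1 from Matrix.ext hM0, one_mulVec]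
  exact stmt_5_general (fun s hs => hK _ (mem_image_of_mem γ hs))
    (fun s hs => hcoop _ (hγ.1 s hs)) (isLinearSolOn_mulVec hM v) (hinit.symm ▸ hv) ht
    (hirr _ (hγ.1 t (Ioc_subset_Icc_self ht)))
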